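/- Let k ≥ 0 be an integer. Let N be an ℕ-valued random variable with E[N^{k+1}] < ∞ and P(N ≥ k+1) > 0, let T_1,T_2,… be 𝒯-valued random elements (with arbitrary joint distribution together with N), and let X_1,X_2,… be i.i.d. 𝒳-valued random elements with law ν, with (X_i)_{i≥1} independent of (N,(T_i)_{i≥1}). Assume ν is a Borel probability measure on 𝒳 with ν({0}) = 0 that is regularly varying with scaling sequence (a_n) and limit measure μ. Let r > 0 satisfy μ({x : d(0,x) = r}) = 0 and let f : 𝒯×𝒳 → [0,∞) be bounded continuous with f(t,x) = 0 whenever d(0,x) < r. Then n^{k+1}·E[exp(−Σ_{i=1}^{N} f(T_i, a_n⁻¹•X_i))·1{#{1 ≤ i ≤ N : d(0, a_n⁻¹•X_i) ≥ r} ≥ k+1}] → (1/(k+1)!)·E[Σ_{1 ≤ i_1,…,i_{k+1} ≤ N, pairwise distinct} ∏_{j=1}^{k+1} ∫_{{x : d(0,x) ≥ r}} e^{−f(T_{i_j},x)} μ(dx)] as n → ∞. -/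

import Mathlib

open MeasureTheory Filter Metric Topology

/-!
Condition on `(N, T)`, so that the points become deterministic and only the marks are random. Each
mark is extreme, that is, lies in `A = {x | r ≤ dist x0 x}`, with a probability of order `1 / n`.
If exactly `k + 1` of the marks are extreme, the truncated exponential is a product over the
extreme points, hence `1 / (k + 1)!` times the sum, over tuples of `k + 1` distinct points, of the
products of `exp (-f) * 1_A`. The event that there are more costs `O(n ^ (-(k + 2)))`, which the
factor `n ^ (k + 1)` does not make up for. Independence turns the expectation of each product into
a product of integrals over `A`, and `n` times each of these converges because `A` is bounded away
from `x0` and its boundary is `μ`-null. A union bound over tuples dominates the conditional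
expectations by a constant times `N ^ (k + 1)`, so the limit may be taken inside the expectation
over `(N, T)`.
-/

section Combinatorics

variable {ι : Type*}

/-- The product of `w` over `s`, truncated to vanish unless at least `m` elements of `s` satisfy
`p`. With `w i = exp (-f (tᵢ, xᵢ))` this is the truncated Laplace functional of the marked points
`(tᵢ, xᵢ)`, where `p i` says that the mark `xᵢ` is extreme. -/
def truncatedProd (p : ι → Prop) [DecidablePred p] (m : ℕ) (s : Finset ι) (w : ι → ℝ) : ℝ :=
  if m ≤ (s.filter p).card then ∏ i ∈ s, w i else 0

section TruncatedProd

variable {p : ι → Prop} [DecidablePred p] {s : Finset ι} {w : ι → ℝ}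

lemma truncatedProd_nonneg (hw0 : ∀ i, 0 ≤ w i) (m : ℕ) : 0 ≤ truncatedProd p m s w := by
  unfold truncatedProd
  split_ifs
  exacts [Finset.prod_nonneg fun i _ => hw0 i, le_rfl]

lemma truncatedProd_le_one (hw0 : ∀ i, 0 ≤ w i) (hw1 : ∀ i, w i ≤ 1) (m : ℕ) :
    truncatedProd p m s w ≤ 1 := by
  unfold truncatedProd
  split_ifs
  exacts [Finset.prod_le_one (fun i _ => hw0 i) fun i _ => hw1 i, zero_le_one]

end TruncatedProd

variable [DecidableEq ι]

/-- The `m`-tuples of pairwise distinct elements of `s`, over which the `m`-th factorial moment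
measure of a point process with points indexed by `s` is a sum. -/
def distinctTuples (s : Finset ι) (m : ℕ) : Finset (Fin m → ι) :=
  (Fintype.piFinset fun _ : Fin m => s).filter fun v => Function.Injective v

lemma mem_distinctTuples {s : Finset ι} {m : ℕ} {v : Fin m → ι} :
    v ∈ distinctTuples s m ↔ (∀ j, v j ∈ s) ∧ Function.Injective v := by
  simp only [distinctTuples, Finset.mem_filter, Fintype.mem_piFinset]

lemma card_distinctTuples (s : Finset ι) (m : ℕ) :
    (distinctTuples s m).card = s.card.descFactorial m := by
  rw [← Fintype.card_coe s, ← Fintype.card_fin m, ← Fintype.card_embedding_eq, Fintype.card_fin,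
    ← Finset.card_univ]
  refine (Finset.card_bij (fun e _ j => (e j : ι)) ?_ ?_ ?_).symm
  · intro e _
    exact mem_distinctTuples.2 ⟨fun j => (e j).2, Subtype.val_injective.comp e.injective⟩
  · intro e _ e' _ h
    ext j
    exact congrFun h j
  · intro v hv
    obtain ⟨hmem, hinj⟩ := mem_distinctTuples.1 hv
    exact ⟨⟨fun j => ⟨v j, hmem j⟩, fun i j h => hinj (congrArg Subtype.val h)⟩,
      Finset.mem_univ _, rfl⟩

lemma card_distinctTuples_le (s : Finset ι) (m : ℕ) : (distinctTuples s m).card ≤ s.card ^ m :=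
  (card_distinctTuples s m).trans_le (s.card.descFactorial_le_pow m)

lemma sum_distinctTuples_prod_le (s : Finset ι) (m : ℕ) {w : ι → ℝ} (hw0 : ∀ i, 0 ≤ w i)
    (hw1 : ∀ i, w i ≤ 1) : ∑ v ∈ distinctTuples s m, ∏ j, w (v j) ≤ (s.card : ℝ) ^ m :=
  calc ∑ v ∈ distinctTuples s m, ∏ j, w (v j) ≤ ∑ _v ∈ distinctTuples s m, (1 : ℝ) :=
        Finset.sum_le_sum fun v _ => Finset.prod_le_one (fun j _ => hw0 (v j)) fun j _ => hw1 (v j)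
    _ = (distinctTuples s m).card := by rw [Finset.sum_const, nsmul_one]
    _ ≤ (s.card : ℝ) ^ m := by exact_mod_cast card_distinctTuples_le s m

lemma sum_distinctTuples_prod_indicator (s : Finset ι) (m : ℕ) (p : ι → Prop)
    [DecidablePred p] (w : ι → ℝ) :
    ∑ v ∈ distinctTuples s m, ∏ j, {i | p i}.indicator w (v j) =
      ∑ v ∈ distinctTuples (s.filter p) m, ∏ j, w (v j) := by
  symm
  refine Finset.sum_subset_zero_on_sdiff (fun v hv => ?_) (fun v hv => ?_) (fun v hv => ?_)
  · simp only [mem_distinctTuples, Finset.mem_filter] at hv ⊢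
    exact ⟨fun j => (hv.1 j).1, hv.2⟩
  · simp only [Finset.mem_sdiff, mem_distinctTuples, Finset.mem_filter] at hv
    obtain ⟨⟨hs, hinj⟩, hnot⟩ := hv
    obtain ⟨j, hj⟩ : ∃ j, ¬ p (v j) := by
      by_contra! hA
      exact hnot ⟨fun j => ⟨hs j, hA j⟩, hinj⟩
    exact Finset.prod_eq_zero (Finset.mem_univ j) (Set.indicator_of_notMem hj w)
  · refine Finset.prod_congr rfl fun j _ => (Set.indicator_of_mem ?_ w).symm
    exact (Finset.mem_filter.1 ((mem_distinctTuples.1 hv).1 j)).2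

lemma sum_distinctTuples_card_prod (s : Finset ι) (w : ι → ℝ) :
    ∑ v ∈ distinctTuples s s.card, ∏ j, w (v j) = s.card.factorial * ∏ i ∈ s, w i := by
  have hprod : ∀ v ∈ distinctTuples s s.card, ∏ j, w (v j) = ∏ i ∈ s, w i := by
    intro v hv
    obtain ⟨hmem, hinj⟩ := mem_distinctTuples.1 hv
    have himage : Finset.univ.image v = s :=
      Finset.eq_of_subset_of_card_le (Finset.image_subset_iff.2 fun j _ => hmem j)
        (by rw [Finset.card_image_of_injective _ hinj, Finset.card_fin])
    calc ∏ j, w (v j) = ∏ i ∈ Finset.univ.image v, w i := (Finset.prod_image hinj.injOn).symm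
      _ = ∏ i ∈ s, w i := by rw [himage]
  rw [Finset.sum_congr rfl hprod, Finset.sum_const, card_distinctTuples, Nat.descFactorial_self,
    nsmul_eq_mul]

lemma sum_distinctTuples_prod_indicator_one (s : Finset ι) (m : ℕ) (p : ι → Prop)
    [DecidablePred p] :
    ∑ v ∈ distinctTuples s m, ∏ j, {i | p i}.indicator (1 : ι → ℝ) (v j) =
      (s.filter p).card.descFactorial m := by
  simp [sum_distinctTuples_prod_indicator, card_distinctTuples]

variable {p : ι → Prop} [DecidablePred p] {s : Finset ι} {w : ι → ℝ}

lemma truncatedProd_le_sum_distinctTuples (hw0 : ∀ i, 0 ≤ w i) (hw1 : ∀ i, w i ≤ 1) (m : ℕ) :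
    truncatedProd p m s w ≤
      ∑ v ∈ distinctTuples s m, ∏ j, {i | p i}.indicator (1 : ι → ℝ) (v j) := by
  rw [sum_distinctTuples_prod_indicator_one]
  by_cases hm : m ≤ (s.filter p).card
  · calc truncatedProd p m s w ≤ 1 := truncatedProd_le_one hw0 hw1 m
      _ ≤ _ := by exact_mod_cast Nat.descFactorial_pos.2 hm
  · rw [truncatedProd, if_neg hm]
    positivity

/-- If exactly `m` elements of `s` satisfy `p`, both terms of the difference agree, and if fewer do,
both vanish; the error comes from the case of at least `m + 1` such elements only. -/
lemma abs_truncatedProd_sub_le (hw0 : ∀ i, 0 ≤ w i) (hw1 : ∀ i, w i ≤ 1)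
    (hwA : ∀ i, ¬ p i → w i = 1) (m : ℕ) :
    |truncatedProd p m s w -
        (m.factorial : ℝ)⁻¹ * ∑ v ∈ distinctTuples s m, ∏ j, {i | p i}.indicator w (v j)| ≤
      s.card ^ m * ∑ v ∈ distinctTuples s (m + 1), ∏ j, {i | p i}.indicator (1 : ι → ℝ) (v j) := by
  rw [sum_distinctTuples_prod_indicator_one, sum_distinctTuples_prod_indicator]
  set e := s.filter p with he
  have hbound_nonneg : (0 : ℝ) ≤ s.card ^ m * e.card.descFactorial (m + 1) := by positivity
  rcases lt_trichotomy e.card m with hlt | rfl | hgt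
  · have hempty : distinctTuples e m = ∅ := by
      rw [← Finset.card_eq_zero, card_distinctTuples, Nat.descFactorial_of_lt hlt]
    rw [truncatedProd, if_neg hlt.not_ge, hempty, Finset.sum_empty, mul_zero, sub_zero, abs_zero]
    exact hbound_nonneg
  · have hprod : ∏ i ∈ s, w i = ∏ i ∈ e, w i := by
      rw [he, Finset.prod_filter]
      exact Finset.prod_congr rfl fun i _ => by split_ifs with hi; exacts [rfl, hwA i hi]
    rw [truncatedProd, if_pos le_rfl, sum_distinctTuples_card_prod, hprod,
      inv_mul_cancel_left₀ (by positivity), sub_self, abs_zero]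
    exact hbound_nonneg
  · have hs : 1 ≤ (s.card : ℝ) ^ m := by
      have hcard : 1 ≤ s.card := Nat.one_le_of_lt (hgt.trans_le (Finset.card_filter_le s _))
      exact one_le_pow₀ (by exact_mod_cast hcard)
    have hsum_nonneg : 0 ≤ ∑ v ∈ distinctTuples e m, ∏ j, w (v j) :=
      Finset.sum_nonneg fun v _ => Finset.prod_nonneg fun j _ => hw0 (v j)
    have hsum_le : ∑ v ∈ distinctTuples e m, ∏ j, w (v j) ≤ (s.card : ℝ) ^ m :=
      (sum_distinctTuples_prod_le e m hw0 hw1).trans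
        (by gcongr; exact Finset.filter_subset p s)
    have hfact : (m.factorial : ℝ)⁻¹ ≤ 1 :=
      inv_le_one_of_one_le₀ (by exact_mod_cast m.factorial_pos)
    calc _ ≤ (s.card : ℝ) ^ m :=
          abs_sub_le_of_nonneg_of_le (truncatedProd_nonneg hw0 m)
            ((truncatedProd_le_one hw0 hw1 m).trans hs) (by positivity)
            ((mul_le_of_le_one_left hsum_nonneg hfact).trans hsum_le)
      _ ≤ _ := le_mul_of_one_le_right (by positivity)
          (by exact_mod_cast Nat.descFactorial_pos.2 hgt)

end Combinatorics

section Portmanteau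

lemma tendsto_finiteMeasure_of_null_frontier {Ω ι : Type*} {L : Filter ι} [MeasurableSpace Ω]
    [TopologicalSpace Ω] [OpensMeasurableSpace Ω] [HasOuterApproxClosed Ω] {μ : FiniteMeasure Ω}
    {μs : ι → FiniteMeasure Ω} (hμs : Tendsto μs L (𝓝 μ)) {E : Set Ω}
    (hE : (μ : Measure Ω) (frontier E) = 0) :
    Tendsto (fun i => μs i E) L (𝓝 (μ E)) := by
  rcases eq_or_ne μ 0 with rfl | hμ
  · refine tendsto_of_tendsto_of_tendsto_of_le_of_le tendsto_const_nhds ?_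
      (fun _ => zero_le) fun i => (μs i).apply_le_mass E
    simpa using hμs.mass
  · have : Nonempty Ω := by
      by_contra hempty
      rw [not_nonempty_iff] at hempty
      exact hμ (Subtype.ext (Measure.eq_zero_of_isEmpty _))
    have hnormalize : Tendsto (fun i => (μs i).normalize E) L (𝓝 (μ.normalize E)) := by
      refine ProbabilityMeasure.tendsto_measure_of_null_frontier_of_tendsto
        (FiniteMeasure.tendsto_normalize_of_tendsto hμs hμ) ?_
      rw [FiniteMeasure.normalize_eq_of_nonzero μ hμ, μ.null_iff_toMeasure_null _ |>.2 hE, mul_zero]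
    simp only [FiniteMeasure.self_eq_mass_mul_normalize]
    exact hμs.mass.mul hnormalize

/-- The measure with density `h` with respect to `μ`, as a finite measure. Negative values of `h`
are replaced by `0`. -/
noncomputable def finiteWithDensity {X : Type*} [MeasurableSpace X] (μ : Measure X) {h : X → ℝ}
    (hint : Integrable h μ) : FiniteMeasure X :=
  ⟨μ.withDensity fun x => ENNReal.ofReal (h x), isFiniteMeasure_withDensity_ofReal hint.2⟩

lemma finiteWithDensity_apply {X : Type*} [MeasurableSpace X] {μ : Measure X} {h : X → ℝ}
    (hint : Integrable h μ) (hh0 : ∀ x, 0 ≤ h x) {A : Set X} (hA : MeasurableSet A) :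
    (finiteWithDensity μ hint A : ℝ) = ∫ x in A, h x ∂μ := by
  rw [integral_eq_lintegral_of_nonneg_ae (.of_forall hh0) hint.1.restrict,
    ← withDensity_apply _ hA]
  rfl

lemma integral_finiteWithDensity {X : Type*} [MeasurableSpace X] {μ : Measure X} {h : X → ℝ}
    (hint : Integrable h μ) (hh : Measurable h) (hh0 : ∀ x, 0 ≤ h x) (φ : X → ℝ) :
    ∫ x, φ x ∂(finiteWithDensity μ hint : Measure X) = ∫ x, h x * φ x ∂μ := by
  change ∫ x, φ x ∂μ.withDensity (fun x => ENNReal.ofReal (h x)) = _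
  rw [integral_withDensity_eq_integral_toReal_smul hh.ennreal_ofReal
    (.of_forall fun _ => ENNReal.ofReal_lt_top)]
  simp only [ENNReal.toReal_ofReal (hh0 _), smul_eq_mul]

variable {X : Type*} [PseudoMetricSpace X] [MeasurableSpace X] {x0 : X} {κ : ℕ → Measure X}
  {μ : Measure X}

/-- `κ n` converges to `μ` away from `x0`, that is, in the `M₀`-topology of Hult and Lindskog: the
integrals converge for all bounded continuous functions that vanish on a ball around `x0`. -/
def TendstoAwayFrom (x0 : X) (κ : ℕ → Measure X) (μ : Measure X) : Prop :=
  ∀ h : X → ℝ, Continuous h → (∃ C, ∀ x, |h x| ≤ C) →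
    (∃ ρ > (0 : ℝ), ∀ x, dist x0 x < ρ → h x = 0) →
    Tendsto (fun n => ∫ x, h x ∂κ n) atTop (𝓝 (∫ x, h x ∂μ))

lemma integrable_of_eq_zero_of_dist_lt (hμ : ∀ ρ > (0 : ℝ), μ {x | ρ ≤ dist x0 x} ≠ ⊤) {h : X → ℝ}
    (hh : AEStronglyMeasurable h μ) {C : ℝ} (hC : ∀ x, |h x| ≤ C) {ρ : ℝ} (hρ : 0 < ρ)
    (hvan : ∀ x, dist x0 x < ρ → h x = 0) : Integrable h μ := by
  have hsupport : Function.support h ⊆ {x | ρ ≤ dist x0 x} := fun x hx =>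
    not_lt.1 fun hlt => hx (hvan x hlt)
  rw [← integrableOn_iff_integrable_of_support_subset hsupport]
  exact Measure.integrableOn_of_bounded (hμ ρ hρ) hh (.of_forall hC)

namespace TendstoAwayFrom

variable [OpensMeasurableSpace X] [∀ n, IsFiniteMeasure (κ n)]

lemma tendsto_setIntegral_of_eq_zero_of_dist_lt (hκ : TendstoAwayFrom x0 κ μ)
    (hμ : ∀ ρ > (0 : ℝ), μ {x | ρ ≤ dist x0 x} ≠ ⊤)
    {A : Set X} (hA : MeasurableSet A) (hAμ : μ (frontier A) = 0)
    {h : X → ℝ} (hh : Continuous h) (hh0 : ∀ x, 0 ≤ h x) {C : ℝ} (hC : ∀ x, h x ≤ C)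
    {ρ : ℝ} (hρ : 0 < ρ) (hvan : ∀ x, dist x0 x < ρ → h x = 0) :
    Tendsto (fun n => ∫ x in A, h x ∂κ n) atTop (𝓝 (∫ x in A, h x ∂μ)) := by
  have habs : ∀ x, |h x| ≤ C := fun x => (abs_of_nonneg (hh0 x)).trans_le (hC x)
  have hintμ : Integrable h μ :=
    integrable_of_eq_zero_of_dist_lt hμ hh.aestronglyMeasurable habs hρ hvan
  have hintκ : ∀ n, Integrable h (κ n) := fun n =>
    .of_bound hh.aestronglyMeasurable C (.of_forall habs)
  have hweak : Tendsto (fun n => finiteWithDensity (κ n) (hintκ n)) atTop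
      (𝓝 (finiteWithDensity μ hintμ)) := by
    refine FiniteMeasure.tendsto_of_forall_integral_tendsto fun φ => ?_
    simp only [integral_finiteWithDensity _ hh.measurable hh0]
    refine hκ _ (hh.mul φ.continuous) ⟨C * ‖φ‖, fun x => ?_⟩
      ⟨ρ, hρ, fun x hx => by rw [hvan x hx, zero_mul]⟩
    rw [abs_mul]
    exact mul_le_mul (habs x) (φ.norm_coe_le_norm x) (abs_nonneg _) ((hh0 x).trans (hC x))
  have hmeasure : Tendsto (fun n => finiteWithDensity (κ n) (hintκ n) A) atTop
      (𝓝 (finiteWithDensity μ hintμ A)) :=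
    tendsto_finiteMeasure_of_null_frontier hweak (withDensity_absolutelyContinuous μ _ hAμ)
  simpa only [finiteWithDensity_apply _ hh0 hA] using NNReal.tendsto_coe.2 hmeasure

lemma tendsto_setIntegral (hκ : TendstoAwayFrom x0 κ μ)
    (hμ : ∀ ρ > (0 : ℝ), μ {x | ρ ≤ dist x0 x} ≠ ⊤)
    {A : Set X} (hA : MeasurableSet A) (hAμ : μ (frontier A) = 0)
    {ρ : ℝ} (hρ : 0 < ρ) (hAρ : ∀ x ∈ A, ρ ≤ dist x0 x)
    {h : X → ℝ} (hh : Continuous h) (hh0 : ∀ x, 0 ≤ h x) {C : ℝ} (hC : ∀ x, h x ≤ C) :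
    Tendsto (fun n => ∫ x in A, h x ∂κ n) atTop (𝓝 (∫ x in A, h x ∂μ)) := by
  have hclosed : IsClosed {x | ρ ≤ dist x0 x} :=
    isClosed_le continuous_const (continuous_const.dist continuous_id)
  have hdisjoint : Disjoint (closedBall x0 (ρ / 2)) {x | ρ ≤ dist x0 x} := by
    refine Set.disjoint_left.2 fun x hx (hx' : ρ ≤ dist x0 x) => ?_
    rw [mem_closedBall'] at hx
    linarith
  obtain ⟨φ, hφ0, hφ1, hφ⟩ :=
    exists_continuous_zero_one_of_isClosed isClosed_closedBall hclosed hdisjoint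
  have hcutoff : ∀ m : Measure X, ∫ x in A, h x ∂m = ∫ x in A, φ x * h x ∂m := fun m =>
    setIntegral_congr_fun hA fun x hx => by simp only [hφ1 (hAρ x hx), Pi.one_apply, one_mul]
  simp only [hcutoff]
  refine hκ.tendsto_setIntegral_of_eq_zero_of_dist_lt hμ hA hAμ (φ.continuous.mul hh)
    (fun x => mul_nonneg (hφ x).1 (hh0 x))
    (fun x => (mul_le_of_le_one_left (hh0 x) (hφ x).2).trans (hC x)) (half_pos hρ) fun x hx => ?_
  rw [hφ0 (mem_closedBall'.2 hx.le), Pi.zero_apply, zero_mul]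

end TendstoAwayFrom

end Portmanteau

section IndependentMarks

open ProbabilityTheory

lemma tendsto_zero_of_tendsto_natCast_mul {u : ℕ → ℝ} {c : ℝ}
    (hu : Tendsto (fun n : ℕ => n * u n) atTop (𝓝 c)) : Tendsto u atTop (𝓝 0) := by
  have hmul := hu.mul tendsto_inv_atTop_nhds_zero_nat
  rw [mul_zero] at hmul
  refine hmul.congr' ?_
  filter_upwards [eventually_ne_atTop 0] with n hn
  field_simp

variable {Ω ι X : Type*} [MeasurableSpace Ω] {P : Measure Ω} [MeasurableSpace X] {ν : Measure X}
  {ξ : ι → Ω → X} {A : Set X} {w : ι → X → ℝ}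

lemma integral_prod_comp_of_injective (hξ : ∀ i, Measurable (ξ i)) (hlaw : ∀ i, P.map (ξ i) = ν)
    (hind : iIndepFun ξ P) {m : ℕ} {v : Fin m → ι} (hv : Function.Injective v)
    (hw : ∀ i, Measurable (w i)) :
    ∫ ω, ∏ j, w (v j) (ξ (v j) ω) ∂P = ∏ j, ∫ x, w (v j) x ∂ν := by
  rw [(hind.precomp hv).integral_fun_prod_comp (f := fun j => w (v j))
    (fun j => (hξ (v j)).aemeasurable) fun j => (hw (v j)).aestronglyMeasurable]
  refine Finset.prod_congr rfl fun j _ => ?_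
  rw [← hlaw (v j), integral_map (hξ (v j)).aemeasurable (hw (v j)).aestronglyMeasurable]

lemma integrable_prod_indicator [IsFiniteMeasure P] (hξ : ∀ i, Measurable (ξ i))
    (hA : MeasurableSet A) (hw : ∀ i, Measurable (w i)) (hw0 : ∀ i x, 0 ≤ w i x)
    (hw1 : ∀ i x, w i x ≤ 1) {m : ℕ} (v : Fin m → ι) :
    Integrable (fun ω => ∏ j, {i | ξ i ω ∈ A}.indicator (fun i => w i (ξ i ω)) (v j)) P := by
  refine .of_bound (C := 1) ?_ (.of_forall fun ω => ?_)
  · exact (Finset.measurable_fun_prod _ fun j _ =>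
      ((hw (v j)).indicator hA).comp (hξ (v j))).aestronglyMeasurable
  · rw [Real.norm_eq_abs, Finset.abs_prod]
    refine Finset.prod_le_one (fun j _ => abs_nonneg _) fun j _ => ?_
    rw [abs_of_nonneg (Set.indicator_nonneg (fun i _ => hw0 i _) _)]
    exact Set.indicator_apply_le' (fun _ => hw1 _ _) fun _ => zero_le_one

lemma measurable_truncatedProd {α : Type*} [MeasurableSpace α] {p : ι → α → Prop}
    [∀ a, DecidablePred fun i => p i a] (hp : ∀ i, MeasurableSet {a | p i a}) {u : ι → α → ℝ}
    (hu : ∀ i, Measurable (u i)) (m : ℕ) (s : Finset ι) :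
    Measurable fun a => truncatedProd (fun i => p i a) m s fun i => u i a := by
  have hcard : Measurable fun a => (s.filter fun i => p i a).card := by
    simp only [Finset.card_filter]
    exact Finset.measurable_fun_sum _ fun i _ => Measurable.ite (hp i) measurable_const
      measurable_const
  exact Measurable.ite (measurableSet_le measurable_const hcard)
    (Finset.measurable_fun_prod _ fun i _ => hu i) measurable_const

variable [DecidableEq ι]

lemma integral_sum_distinctTuples_prod_indicator [IsFiniteMeasure P] (hξ : ∀ i, Measurable (ξ i))
    (hlaw : ∀ i, P.map (ξ i) = ν) (hind : iIndepFun ξ P) (hA : MeasurableSet A)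
    (hw : ∀ i, Measurable (w i)) (hw0 : ∀ i x, 0 ≤ w i x) (hw1 : ∀ i x, w i x ≤ 1)
    (s : Finset ι) (m : ℕ) :
    ∫ ω, ∑ v ∈ distinctTuples s m,
        ∏ j, {i | ξ i ω ∈ A}.indicator (fun i => w i (ξ i ω)) (v j) ∂P =
      ∑ v ∈ distinctTuples s m, ∏ j, ∫ x in A, w (v j) x ∂ν := by
  rw [integral_finsetSum _ fun v _ => integrable_prod_indicator hξ hA hw hw0 hw1 v]
  refine Finset.sum_congr rfl fun v hv => ?_
  simp only [← integral_indicator hA]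
  exact integral_prod_comp_of_injective hξ hlaw hind (mem_distinctTuples.1 hv).2
    fun i => (hw i).indicator hA

lemma integrable_sum_distinctTuples_prod_indicator_one [IsFiniteMeasure P]
    (hξ : ∀ i, Measurable (ξ i)) (hA : MeasurableSet A) (s : Finset ι) (m : ℕ) :
    Integrable (fun ω => ∑ v ∈ distinctTuples s m,
      ∏ j, {i | ξ i ω ∈ A}.indicator (1 : ι → ℝ) (v j)) P :=
  integrable_finsetSum _ fun v _ => integrable_prod_indicator (w := 1) hξ hA
    (fun _ => measurable_const) (fun _ _ => zero_le_one) (fun _ _ => le_rfl) v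

lemma integral_sum_distinctTuples_prod_indicator_one_le [IsFiniteMeasure P]
    (hξ : ∀ i, Measurable (ξ i)) (hlaw : ∀ i, P.map (ξ i) = ν) (hind : iIndepFun ξ P)
    (hA : MeasurableSet A) (s : Finset ι) (m : ℕ) :
    ∫ ω, ∑ v ∈ distinctTuples s m, ∏ j, {i | ξ i ω ∈ A}.indicator (1 : ι → ℝ) (v j) ∂P ≤
      (s.card * ν.real A) ^ m := by
  calc _ = ∑ _v ∈ distinctTuples s m, ∏ _j : Fin m, ∫ _x in A, (1 : ℝ) ∂ν :=
        integral_sum_distinctTuples_prod_indicator (w := 1) hξ hlaw hind hA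
          (fun _ => measurable_const) (fun _ _ => zero_le_one) (fun _ _ => le_rfl) s m
    _ = (distinctTuples s m).card * ν.real A ^ m := by simp
    _ ≤ (s.card * ν.real A) ^ m := by
        rw [mul_pow]
        gcongr
        exact_mod_cast card_distinctTuples_le s m

variable [DecidablePred (· ∈ A)]

omit [DecidableEq ι] in
lemma integral_truncatedProd_le [IsFiniteMeasure P] (hξ : ∀ i, Measurable (ξ i))
    (hlaw : ∀ i, P.map (ξ i) = ν) (hind : iIndepFun ξ P) (hA : MeasurableSet A)
    (hw0 : ∀ i x, 0 ≤ w i x) (hw1 : ∀ i x, w i x ≤ 1) (s : Finset ι) (m : ℕ) :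
    ∫ ω, truncatedProd (fun i => ξ i ω ∈ A) m s (fun i => w i (ξ i ω)) ∂P ≤
      (s.card * ν.real A) ^ m := by
  classical
  exact (integral_mono_of_nonneg (.of_forall fun _ => truncatedProd_nonneg (fun _ => hw0 _ _) m)
    (integrable_sum_distinctTuples_prod_indicator_one hξ hA s m)
    (.of_forall fun _ => truncatedProd_le_sum_distinctTuples (fun _ => hw0 _ _)
      (fun _ => hw1 _ _) m)).trans
    (integral_sum_distinctTuples_prod_indicator_one_le hξ hlaw hind hA s m)

lemma abs_integral_truncatedProd_sub_le [IsFiniteMeasure P] (hξ : ∀ i, Measurable (ξ i))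
    (hlaw : ∀ i, P.map (ξ i) = ν) (hind : iIndepFun ξ P) (hA : MeasurableSet A)
    (hw : ∀ i, Measurable (w i)) (hw0 : ∀ i x, 0 ≤ w i x) (hw1 : ∀ i x, w i x ≤ 1)
    (hwA : ∀ i, ∀ x ∉ A, w i x = 1) (s : Finset ι) (m : ℕ) :
    |∫ ω, truncatedProd (fun i => ξ i ω ∈ A) m s (fun i => w i (ξ i ω)) ∂P -
        (m.factorial : ℝ)⁻¹ * ∑ v ∈ distinctTuples s m, ∏ j, ∫ x in A, w (v j) x ∂ν| ≤
      s.card ^ m * (s.card * ν.real A) ^ (m + 1) := by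
  have hint : Integrable
      (fun ω => truncatedProd (fun i => ξ i ω ∈ A) m s (fun i => w i (ξ i ω))) P := by
    refine .of_bound (measurable_truncatedProd (fun i => hξ i hA)
      (fun i => (hw i).comp (hξ i)) m s).aestronglyMeasurable 1 (.of_forall fun ω => ?_)
    rw [Real.norm_of_nonneg (truncatedProd_nonneg (fun i => hw0 i _) m)]
    exact truncatedProd_le_one (fun i => hw0 i _) (fun i => hw1 i _) m
  have hint_sum : Integrable (fun ω => ∑ v ∈ distinctTuples s m,
      ∏ j, {i | ξ i ω ∈ A}.indicator (fun i => w i (ξ i ω)) (v j)) P :=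
    integrable_finsetSum _ fun v _ => integrable_prod_indicator hξ hA hw hw0 hw1 v
  rw [← integral_sum_distinctTuples_prod_indicator hξ hlaw hind hA hw hw0 hw1 s m,
    ← integral_const_mul, ← integral_sub hint (hint_sum.const_mul _), ← Real.norm_eq_abs]
  refine (norm_integral_le_of_norm_le
    ((integrable_sum_distinctTuples_prod_indicator_one hξ hA s (m + 1)).const_mul _)
    (.of_forall fun ω => (Real.norm_eq_abs _).trans_le (abs_truncatedProd_sub_le
      (fun i => hw0 i _) (fun i => hw1 i _) (fun i hi => hwA i _ hi) m))).trans ?_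
  rw [integral_const_mul]
  exact mul_le_mul_of_nonneg_left
    (integral_sum_distinctTuples_prod_indicator_one_le hξ hlaw hind hA s (m + 1)) (by positivity)

lemma tendsto_pow_mul_integral_truncatedProd [IsFiniteMeasure P] {ν : ℕ → Measure X}
    {ξ : ℕ → ι → Ω → X} (hξ : ∀ n i, Measurable (ξ n i)) (hlaw : ∀ n i, P.map (ξ n i) = ν n)
    (hind : ∀ n, iIndepFun (ξ n) P) (hA : MeasurableSet A)
    (hw : ∀ i, Measurable (w i)) (hw0 : ∀ i x, 0 ≤ w i x) (hw1 : ∀ i x, w i x ≤ 1)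
    (hwA : ∀ i, ∀ x ∉ A, w i x = 1) {c : ℝ}
    (hνA : Tendsto (fun n : ℕ => n * (ν n).real A) atTop (𝓝 c)) {ℓ : ι → ℝ}
    (hνw : ∀ i, Tendsto (fun n : ℕ => n * ∫ x in A, w i x ∂ν n) atTop (𝓝 (ℓ i)))
    (s : Finset ι) (m : ℕ) :
    Tendsto (fun n : ℕ => (n : ℝ) ^ m *
        ∫ ω, truncatedProd (fun i => ξ n i ω ∈ A) m s (fun i => w i (ξ n i ω)) ∂P) atTop
      (𝓝 ((m.factorial : ℝ)⁻¹ * ∑ v ∈ distinctTuples s m, ∏ j, ℓ (v j))) := by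
  have hmain : Tendsto (fun n : ℕ => (n : ℝ) ^ m * ((m.factorial : ℝ)⁻¹ *
      ∑ v ∈ distinctTuples s m, ∏ j, ∫ x in A, w (v j) x ∂ν n)) atTop
      (𝓝 ((m.factorial : ℝ)⁻¹ * ∑ v ∈ distinctTuples s m, ∏ j, ℓ (v j))) := by
    have hscale : ∀ n : ℕ, (n : ℝ) ^ m * ((m.factorial : ℝ)⁻¹ *
        ∑ v ∈ distinctTuples s m, ∏ j, ∫ x in A, w (v j) x ∂ν n) =
        (m.factorial : ℝ)⁻¹ * ∑ v ∈ distinctTuples s m, ∏ j, (n * ∫ x in A, w (v j) x ∂ν n) := by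
      intro n
      simp only [Finset.prod_mul_distrib, Finset.prod_const, Finset.card_fin, ← Finset.mul_sum]
      ring
    simp only [hscale]
    exact (tendsto_finsetSum _ fun v _ => tendsto_finsetProd _ fun j _ => hνw (v j)).const_mul _
  have herror : Tendsto (fun n : ℕ => (s.card : ℝ) ^ (2 * m + 1) *
      ((n * (ν n).real A) ^ m * (ν n).real A)) atTop (𝓝 0) := by
    simpa using ((hνA.pow m).mul (tendsto_zero_of_tendsto_natCast_mul hνA)).const_mul
      ((s.card : ℝ) ^ (2 * m + 1))
  refine tendsto_of_tendsto_of_dist hmain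
    (squeeze_zero (fun _ => dist_nonneg) (fun n => ?_) herror)
  rw [dist_comm, Real.dist_eq, ← mul_sub, abs_mul, abs_of_nonneg (by positivity)]
  calc _ ≤ (n : ℝ) ^ m * (s.card ^ m * (s.card * (ν n).real A) ^ (m + 1)) := by
        gcongr
        exact abs_integral_truncatedProd_sub_le (hξ n) (hlaw n) (hind n) hA hw hw0 hw1 hwA s m
    _ = _ := by ring

end IndependentMarks

section RandomPoints

open ProbabilityTheory

lemma integral_comp_prodMk_of_indepFun {Ω E F : Type*} [MeasurableSpace Ω] [MeasurableSpace E]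
    [MeasurableSpace F] {P : Measure Ω} [IsFiniteMeasure P] {Y : Ω → E} {Z : Ω → F}
    (hY : Measurable Y) (hZ : Measurable Z) (hYZ : IndepFun Y Z P) {G : E × F → ℝ}
    (hG : Measurable G) (hint : Integrable (fun ω => G (Y ω, Z ω)) P) :
    ∫ ω, G (Y ω, Z ω) ∂P = ∫ ω, ∫ ω', G (Y ω, Z ω') ∂P ∂P := by
  have hmap := (indepFun_iff_map_prod_eq_prod_map_map hY.aemeasurable hZ.aemeasurable).1 hYZ
  have hintG : Integrable G ((P.map Y).prod (P.map Z)) := by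
    rw [← hmap]
    exact (integrable_map_measure hG.aestronglyMeasurable (hY.prodMk hZ).aemeasurable).2 hint
  rw [← integral_map (hY.prodMk hZ).aemeasurable hG.aestronglyMeasurable, hmap,
    integral_prod _ hintG, integral_map hY.aemeasurable
      hG.stronglyMeasurable.integral_prod_right'.aestronglyMeasurable]
  exact integral_congr_ae (.of_forall fun ω => integral_map hZ.aemeasurable
    (hG.comp measurable_prodMk_left).aestronglyMeasurable)

variable {Ω T X : Type*} [MeasurableSpace Ω] {P : Measure Ω} [MeasurableSpace T]
  [MeasurableSpace X] {A : Set X} [DecidablePred (· ∈ A)]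

lemma measurable_truncatedProd_range (hA : MeasurableSet A) {w : T → X → ℝ}
    (hw : Measurable (Function.uncurry w)) (m : ℕ) :
    Measurable fun z : (ℕ × (ℕ → T)) × (ℕ → X) =>
      truncatedProd (fun i => z.2 i ∈ A) m (Finset.range z.1.1) fun i => w (z.1.2 i) (z.2 i) := by
  have hmark : ∀ i, Measurable fun y : (ℕ → T) × (ℕ → X) => y.2 i := by fun_prop
  have hweight : ∀ i, Measurable fun y : (ℕ → T) × (ℕ → X) => w (y.1 i) (y.2 i) := by fun_prop
  have hfix : ∀ j, Measurable fun y : (ℕ → T) × (ℕ → X) =>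
      truncatedProd (fun i => y.2 i ∈ A) m (Finset.range j) fun i => w (y.1 i) (y.2 i) := fun j =>
    measurable_truncatedProd (p := fun i (y : (ℕ → T) × (ℕ → X)) => y.2 i ∈ A)
      (fun i => hmark i hA) hweight m _
  have hcount : Measurable fun q : ℕ × ((ℕ → T) × (ℕ → X)) =>
      truncatedProd (fun i => q.2.2 i ∈ A) m (Finset.range q.1) fun i => w (q.2.1 i) (q.2.2 i) :=
    measurable_from_prod_countable_right hfix
  exact hcount.comp MeasurableEquiv.prodAssoc.measurable

/-- The expected truncated product of `w (tᵢ, ξᵢ)` over `i < j` for a deterministic number `j` of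
points and deterministic positions `tᵢ`, with `y = (j, t)`. -/
noncomputable def condTruncatedMean (P : Measure Ω) (A : Set X) [DecidablePred (· ∈ A)] (m : ℕ)
    (w : T → X → ℝ) (ξ : ℕ → Ω → X) (y : ℕ × (ℕ → T)) : ℝ :=
  ∫ ω, truncatedProd (fun i => ξ i ω ∈ A) m (Finset.range y.1) (fun i => w (y.2 i) (ξ i ω)) ∂P

lemma measurable_condTruncatedMean [SFinite P] {ξ : ℕ → Ω → X} (hξ : ∀ i, Measurable (ξ i))
    (hA : MeasurableSet A) {w : T → X → ℝ} (hw : Measurable (Function.uncurry w)) (m : ℕ) :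
    Measurable (condTruncatedMean P A m w ξ) :=
  ((measurable_truncatedProd_range hA hw m).comp (measurable_fst.prodMk
    ((measurable_pi_lambda _ hξ).comp measurable_snd))).stronglyMeasurable.integral_prod_right'
    |>.measurable

variable [IsFiniteMeasure P] {N : Ω → ℕ} (hN : Measurable N) {τ : ℕ → Ω → T}
  (hτ : ∀ i, Measurable (τ i)) {w : T → X → ℝ} (hw : Measurable (Function.uncurry w))
  (hw0 : ∀ t x, 0 ≤ w t x) (hw1 : ∀ t x, w t x ≤ 1) (hA : MeasurableSet A)

include hN hτ hw hw0 hw1 hA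

lemma integral_truncatedProd_eq_integral_condTruncatedMean {ξ : ℕ → Ω → X}
    (hξ : ∀ i, Measurable (ξ i))
    (hindep : IndepFun (fun ω => (N ω, fun i => τ i ω)) (fun ω i => ξ i ω) P) (m : ℕ) :
    ∫ ω, truncatedProd (fun i => ξ i ω ∈ A) m (Finset.range (N ω))
        (fun i => w (τ i ω) (ξ i ω)) ∂P =
      ∫ ω, condTruncatedMean P A m w ξ (N ω, fun i => τ i ω) ∂P := by
  have hY : Measurable fun ω => (N ω, fun i => τ i ω) := hN.prodMk (measurable_pi_lambda _ hτ)
  have hZ : Measurable fun ω i => ξ i ω := measurable_pi_lambda _ hξ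
  have hmeas := measurable_truncatedProd_range hA hw m
  refine integral_comp_prodMk_of_indepFun hY hZ hindep hmeas
    (.of_bound (hmeas.comp (hY.prodMk hZ)).aestronglyMeasurable 1 (.of_forall fun ω => ?_))
  rw [Real.norm_of_nonneg (truncatedProd_nonneg (fun i => hw0 _ _) m)]
  exact truncatedProd_le_one (fun i => hw0 _ _) (fun i => hw1 _ _) m

lemma tendsto_pow_mul_integral_truncatedProd_range
    {m : ℕ} (hNmom : Integrable (fun ω => (N ω : ℝ) ^ m) P) {ν : ℕ → Measure X}
    {ξ : ℕ → ℕ → Ω → X} (hξ : ∀ n i, Measurable (ξ n i)) (hlaw : ∀ n i, P.map (ξ n i) = ν n)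
    (hind : ∀ n, iIndepFun (ξ n) P)
    (hindep : ∀ n, IndepFun (fun ω => (N ω, fun i => τ i ω)) (fun ω i => ξ n i ω) P)
    (hwA : ∀ t, ∀ x ∉ A, w t x = 1) {c : ℝ}
    (hνA : Tendsto (fun n : ℕ => n * (ν n).real A) atTop (𝓝 c)) {ℓ : T → ℝ}
    (hνw : ∀ t, Tendsto (fun n : ℕ => n * ∫ x in A, w t x ∂ν n) atTop (𝓝 (ℓ t))) :
    Tendsto (fun n : ℕ => (n : ℝ) ^ m * ∫ ω, truncatedProd (fun i => ξ n i ω ∈ A) m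
        (Finset.range (N ω)) (fun i => w (τ i ω) (ξ n i ω)) ∂P) atTop
      (𝓝 ((m.factorial : ℝ)⁻¹ *
        ∫ ω, ∑ v ∈ distinctTuples (Finset.range (N ω)) m, ∏ j, ℓ (τ (v j) ω) ∂P)) := by
  have hY : Measurable fun ω => (N ω, fun i => τ i ω) := hN.prodMk (measurable_pi_lambda _ hτ)
  obtain ⟨C, hC⟩ := hνA.bddAbove_range
  have hbound : ∀ (n : ℕ) ω, (n : ℝ) ^ m * condTruncatedMean P A m w (ξ n) (N ω, fun i => τ i ω) ≤
      (C * N ω) ^ m := by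
    intro n ω
    calc _ ≤ (n : ℝ) ^ m * ((Finset.range (N ω)).card * (ν n).real A) ^ m :=
          mul_le_mul_of_nonneg_left (integral_truncatedProd_le (hξ n) (hlaw n) (hind n) hA
            (fun _ => hw0 _) (fun _ => hw1 _) _ m) (by positivity)
      _ = (n * (ν n).real A * N ω) ^ m := by rw [Finset.card_range]; ring
      _ ≤ (C * N ω) ^ m := by gcongr; exact hC ⟨n, rfl⟩
  simp only [integral_truncatedProd_eq_integral_condTruncatedMean hN hτ hw hw0 hw1 hA (hξ _)
    (hindep _), ← integral_const_mul]
  refine tendsto_integral_of_dominated_convergence (fun ω => (C * N ω) ^ m) (fun n => ?_)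
    (by simpa only [mul_pow] using hNmom.const_mul _) (fun n => .of_forall fun ω => ?_)
    (.of_forall fun ω => ?_)
  · exact (((measurable_condTruncatedMean (hξ n) hA hw m).comp hY).const_mul _).aestronglyMeasurable
  · have hnonneg : 0 ≤ condTruncatedMean P A m w (ξ n) (N ω, fun i => τ i ω) :=
      integral_nonneg fun _ => truncatedProd_nonneg (fun _ => hw0 _ _) m
    rw [Real.norm_of_nonneg (by positivity)]
    exact hbound n ω
  · exact tendsto_pow_mul_integral_truncatedProd (w := fun i => w (τ i ω)) hξ hlaw hind hA
      (fun i => hw.of_uncurry_left) (fun _ => hw0 _) (fun _ => hw1 _) (fun _ => hwA _) hνA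
      (fun i => hνw _) _ m

end RandomPoints

section CylinderIndependence

open ProbabilityTheory

lemma measure_preimage_inter_eq_mul_of_singleton {Ω α : Type*} [MeasurableSpace Ω]
    [MeasurableSpace α] [DiscreteMeasurableSpace α] [Countable α] {P : Measure Ω} {N : Ω → α}
    (hN : Measurable N) {E F : Set Ω} {c : ENNReal}
    (h : ∀ j, P (N ⁻¹' {j} ∩ E ∩ F) = P (N ⁻¹' {j} ∩ E) * c) (J : Set α) :
    P (N ⁻¹' J ∩ E ∩ F) = P (N ⁻¹' J ∩ E) * c := by
  have hmap : (P.restrict (E ∩ F)).map N = c • (P.restrict E).map N := by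
    refine Measure.ext_of_singleton fun j => ?_
    have hj := hN (measurableSet_singleton j)
    rw [Measure.smul_apply, smul_eq_mul, Measure.map_apply hN (measurableSet_singleton j),
      Measure.map_apply hN (measurableSet_singleton j), Measure.restrict_apply hj,
      Measure.restrict_apply hj, ← Set.inter_assoc, h j, mul_comm]
  have hJ : MeasurableSet (N ⁻¹' J) := hN .of_discrete
  have happly := congrArg (fun κ => κ J) hmap
  simpa only [Measure.smul_apply, smul_eq_mul, Measure.map_apply hN (.of_discrete (s := J)),
    Measure.restrict_apply hJ, ← Set.inter_assoc, mul_comm c] using happly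

lemma biInter_preimage_eq_preimage_pi {Ω ι X : Type*} (ξ : ι → Ω → X) (S : Finset ι)
    (B : ι → Set X) : (⋂ i ∈ S, ξ i ⁻¹' B i) = (fun ω i => ξ i ω) ⁻¹' Set.pi S B := by
  ext ω
  simp only [Set.mem_iInter, Set.mem_preimage, Set.mem_pi, Finset.mem_coe]

lemma exists_measurable_range_pi_eq {α : Type*} [MeasurableSpace α] {S : Finset ℕ} {n : ℕ}
    (hS : S ⊆ Finset.range n) {B : ℕ → Set α} (hB : ∀ i ∈ S, MeasurableSet (B i)) :
    ∃ B' : ℕ → Set α, (∀ i, MeasurableSet (B' i)) ∧ (∀ i ∈ S, B' i = B i) ∧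
      (∀ i ∉ S, B' i = Set.univ) ∧ Set.pi (Finset.range n) B' = Set.pi S B := by
  refine ⟨fun i => if i ∈ S then B i else Set.univ, ?_, fun i hi => if_pos hi,
    fun i hi => if_neg hi, ?_⟩
  · intro i
    dsimp only
    split_ifs with hi
    exacts [hB i hi, .univ]
  · ext x
    simp only [Set.mem_pi, Finset.mem_coe]
    refine ⟨fun h i hi => by simpa only [if_pos hi] using h i (hS hi), fun h i _ => ?_⟩
    split_ifs with hi
    exacts [h i hi, Set.mem_univ _]

variable {Ω E T X : Type*} [MeasurableSpace Ω] {P : Measure Ω} [MeasurableSpace E]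
  [MeasurableSpace T] [MeasurableSpace X] {ξ : ℕ → Ω → X}

lemma iIndepFun_of_measure_iInter_range
    (h : ∀ (n : ℕ) (B : ℕ → Set X), (∀ i, MeasurableSet (B i)) →
      P (⋂ i ∈ Finset.range n, ξ i ⁻¹' B i) = ∏ i ∈ Finset.range n, P (ξ i ⁻¹' B i)) :
    iIndepFun ξ P := by
  refine iIndepFun_iff_measure_inter_preimage_eq_mul.2 fun S B hB => ?_
  have huniv : P Set.univ = 1 := by simpa using h 0 (fun _ => Set.univ) fun _ => .univ
  obtain ⟨n, hn⟩ := S.exists_nat_subset_range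
  obtain ⟨B', hB', hmem, hnot, hpi⟩ := exists_measurable_range_pi_eq hn hB
  calc P (⋂ i ∈ S, ξ i ⁻¹' B i)
      = P (⋂ i ∈ Finset.range n, ξ i ⁻¹' B' i) := by
        rw [biInter_preimage_eq_preimage_pi, biInter_preimage_eq_preimage_pi, hpi]
    _ = ∏ i ∈ Finset.range n, P (ξ i ⁻¹' B' i) := h n _ hB'
    _ = ∏ i ∈ S, P (ξ i ⁻¹' B i) := by
        rw [← Finset.prod_subset hn fun i _ hi => by rw [hnot i hi, Set.preimage_univ, huniv]]
        exact Finset.prod_congr rfl fun i hi => by rw [hmem i hi]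

lemma isPiSystem_measurable_squareCylinders (X : Type*) [MeasurableSpace X] :
    IsPiSystem (squareCylinders fun _ : ℕ => {B : Set X | MeasurableSet B}) :=
  isPiSystem_squareCylinders (fun _ => MeasurableSpace.isPiSystem_measurableSet) fun _ => .univ

lemma generateFrom_prod_squareCylinders (E T : Type*) [MeasurableSpace E] [MeasurableSpace T] :
    MeasurableSpace.generateFrom (Set.image2 (· ×ˢ ·) {J : Set E | MeasurableSet J}
      (squareCylinders fun _ : ℕ => {B : Set T | MeasurableSet B})) =
      Prod.instMeasurableSpace := by
  have hspanning :
      IsCountablySpanning (squareCylinders fun _ : ℕ => {B : Set T | MeasurableSet B}) :=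
    ⟨fun _ => Set.univ, fun _ => ⟨∅, fun _ => Set.univ, fun _ _ => .univ, by simp⟩,
      Set.iUnion_const _⟩
  exact generateFrom_eq_prod MeasurableSpace.generateFrom_measurableSet
    generateFrom_squareCylinders isCountablySpanning_measurableSet hspanning

lemma indepFun_prodMk_pi_of_measure_inter {N : Ω → E} (hN : Measurable N) {τ : ℕ → Ω → T}
    (hτ : ∀ i, Measurable (τ i)) (hξ : ∀ i, Measurable (ξ i)) [IsZeroOrProbabilityMeasure P]
    (h : ∀ (J : Set E) (n : ℕ) (A : ℕ → Set T) (B : ℕ → Set X), MeasurableSet J →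
      (∀ i, MeasurableSet (A i)) → (∀ i, MeasurableSet (B i)) →
      P (N ⁻¹' J ∩ (⋂ i ∈ Finset.range n, τ i ⁻¹' A i) ∩ ⋂ i ∈ Finset.range n, ξ i ⁻¹' B i) =
        P (N ⁻¹' J ∩ ⋂ i ∈ Finset.range n, τ i ⁻¹' A i) *
          P (⋂ i ∈ Finset.range n, ξ i ⁻¹' B i)) :
    IndepFun (fun ω => (N ω, fun i => τ i ω)) (fun ω i => ξ i ω) P := by
  refine (IndepFun_iff_Indep _ _ _).2 <| IndepSets.indep
    (hN.prodMk (measurable_pi_iff.2 hτ)).comap_le (measurable_pi_iff.2 hξ).comap_le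
    ((MeasurableSpace.isPiSystem_measurableSet.prod
      (isPiSystem_measurable_squareCylinders T)).comap _)
    ((isPiSystem_measurable_squareCylinders X).comap _)
    (by rw [← generateFrom_prod_squareCylinders, MeasurableSpace.comap_generateFrom]; rfl)
    (by rw [← generateFrom_squareCylinders, MeasurableSpace.comap_generateFrom]; rfl) ?_
  rw [IndepSets_iff]
  rintro - - ⟨-, ⟨J, hJ, -, ⟨I, A, hA, rfl⟩, rfl⟩, rfl⟩ ⟨-, ⟨I', B, hB, rfl⟩, rfl⟩
  obtain ⟨n, hn⟩ := (I ∪ I').exists_nat_subset_range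
  obtain ⟨A', hA', -, -, hApi⟩ :=
    exists_measurable_range_pi_eq (Finset.union_subset_left hn) fun i _ => hA i trivial
  obtain ⟨B', hB', -, -, hBpi⟩ :=
    exists_measurable_range_pi_eq (Finset.union_subset_right hn) fun i _ => hB i trivial
  have hcyl := h J n A' B' hJ hA' hB'
  rwa [biInter_preimage_eq_preimage_pi, biInter_preimage_eq_preimage_pi, hApi, hBpi] at hcyl

lemma iIndepFun_and_indepFun_prodMk_pi_of_measure_inter [IsProbabilityMeasure P]
    [DiscreteMeasurableSpace E] [Countable E] {N : Ω → E} (hN : Measurable N) {τ : ℕ → Ω → T}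
    (hτ : ∀ i, Measurable (τ i)) (hξ : ∀ i, Measurable (ξ i))
    (h : ∀ (j : E) (n : ℕ) (A : ℕ → Set T) (B : ℕ → Set X),
      (∀ i, MeasurableSet (A i)) → (∀ i, MeasurableSet (B i)) →
      P (N ⁻¹' {j} ∩ (⋂ i ∈ Finset.range n, τ i ⁻¹' A i) ∩ ⋂ i ∈ Finset.range n, ξ i ⁻¹' B i) =
        P (N ⁻¹' {j} ∩ ⋂ i ∈ Finset.range n, τ i ⁻¹' A i) *
          ∏ i ∈ Finset.range n, P (ξ i ⁻¹' B i)) :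
    iIndepFun ξ P ∧ IndepFun (fun ω => (N ω, fun i => τ i ω)) (fun ω i => ξ i ω) P := by
  have hJ : ∀ (J : Set E) (n : ℕ) (A : ℕ → Set T) (B : ℕ → Set X),
      (∀ i, MeasurableSet (A i)) → (∀ i, MeasurableSet (B i)) →
      P (N ⁻¹' J ∩ (⋂ i ∈ Finset.range n, τ i ⁻¹' A i) ∩ ⋂ i ∈ Finset.range n, ξ i ⁻¹' B i) =
        P (N ⁻¹' J ∩ ⋂ i ∈ Finset.range n, τ i ⁻¹' A i) *
          ∏ i ∈ Finset.range n, P (ξ i ⁻¹' B i) := fun J n A B hA hB =>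
    measure_preimage_inter_eq_mul_of_singleton hN (fun j => h j n A B hA hB) J
  have hmarks : ∀ (n : ℕ) (B : ℕ → Set X), (∀ i, MeasurableSet (B i)) →
      P (⋂ i ∈ Finset.range n, ξ i ⁻¹' B i) = ∏ i ∈ Finset.range n, P (ξ i ⁻¹' B i) :=
    fun n B hB => by simpa using hJ Set.univ n (fun _ => Set.univ) B (fun _ => .univ) hB
  refine ⟨iIndepFun_of_measure_iInter_range hmarks,
    indepFun_prodMk_pi_of_measure_inter hN hτ hξ fun J n A B _ hA hB => ?_⟩
  rw [hmarks n B hB, hJ J n A B hA hB]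

end CylinderIndependence

section Laplace

open ProbabilityTheory

variable {Ω T X : Type*} [MeasurableSpace Ω] {P : Measure Ω} [MeasurableSpace T]
  [PseudoMetricSpace X] [MeasurableSpace X] [OpensMeasurableSpace X]

theorem stmt_14_general {x0 : X} {ν : ℕ → Measure X} {μ : Measure X}
    (hμ : ∀ ρ > (0 : ℝ), μ {x | ρ ≤ dist x0 x} ≠ ⊤)
    (hν : TendstoAwayFrom x0 (fun n => (n : NNReal) • ν n) μ)
    {m : ℕ} {N : Ω → ℕ} (hN : Measurable N) (hNmom : Integrable (fun ω => (N ω : ℝ) ^ m) P)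
    {τ : ℕ → Ω → T} (hτ : ∀ i, Measurable (τ i))
    {ξ : ℕ → ℕ → Ω → X} (hξ : ∀ n i, Measurable (ξ n i)) (hlaw : ∀ n i, P.map (ξ n i) = ν n)
    (hind : ∀ n, iIndepFun (ξ n) P)
    (hindep : ∀ n, IndepFun (fun ω => (N ω, fun i => τ i ω)) (fun ω i => ξ n i ω) P)
    {A : Set X} [DecidablePred (· ∈ A)] (hA : MeasurableSet A) (hAμ : μ (frontier A) = 0)
    {ρ : ℝ} (hρ : 0 < ρ) (hAρ : ∀ x ∈ A, ρ ≤ dist x0 x)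
    {f : T × X → ℝ} (hf : Measurable f) (hfc : ∀ t, Continuous fun x => f (t, x))
    (hf0 : ∀ z, 0 ≤ f z) (hfA : ∀ t, ∀ x ∉ A, f (t, x) = 0) :
    Tendsto (fun n : ℕ => (n : ℝ) ^ m *
        ∫ ω, (if m ≤ ((Finset.range (N ω)).filter fun i => ξ n i ω ∈ A).card then
            Real.exp (-∑ i ∈ Finset.range (N ω), f (τ i ω, ξ n i ω))
          else 0) ∂P) atTop
      (𝓝 ((m.factorial : ℝ)⁻¹ * ∫ ω, ∑ v ∈ distinctTuples (Finset.range (N ω)) m,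
        ∏ j, ∫ x in A, Real.exp (-f (τ (v j) ω, x)) ∂μ ∂P)) := by
  have := (hind 0).isProbabilityMeasure
  have hfinite : ∀ n, IsFiniteMeasure (ν n) := fun n => hlaw n 0 ▸ inferInstance
  have hsetIntegral {h : X → ℝ} (hh : Continuous h) (hh0 : ∀ x, 0 ≤ h x) (hh1 : ∀ x, h x ≤ 1) :
      Tendsto (fun n : ℕ => n * ∫ x in A, h x ∂ν n) atTop (𝓝 (∫ x in A, h x ∂μ)) := by
    simpa only [Measure.restrict_smul, integral_smul_nnreal_measure, NNReal.smul_def,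
      NNReal.coe_natCast, smul_eq_mul] using
      hν.tendsto_setIntegral hμ hA hAμ hρ hAρ hh hh0 hh1
  have hexp_sum : ∀ n ω, Real.exp (-∑ i ∈ Finset.range (N ω), f (τ i ω, ξ n i ω)) =
      ∏ i ∈ Finset.range (N ω), Real.exp (-f (τ i ω, ξ n i ω)) := fun n ω => by
    rw [← Finset.sum_neg_distrib, Real.exp_sum]
  have hexp_le_one : ∀ t x, Real.exp (-f (t, x)) ≤ 1 := fun t x =>
    Real.exp_le_one_iff.2 (neg_nonpos.2 (hf0 _))
  simp only [hexp_sum]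
  exact tendsto_pow_mul_integral_truncatedProd_range (w := fun t x => Real.exp (-f (t, x))) hN hτ
    (Real.measurable_exp.comp hf.neg) (fun _ _ => (Real.exp_pos _).le) hexp_le_one hA hNmom hξ hlaw
    hind hindep (fun t x hx => by simp only [hfA t x hx, neg_zero, Real.exp_zero])
    (by simpa using hsetIntegral continuous_const (fun _ => zero_le_one) fun _ => le_rfl)
    fun t => hsetIntegral (Real.continuous_exp.comp (hfc t).neg) (fun _ => (Real.exp_pos _).le)
      (hexp_le_one t)

end Laplace

/-- Hidden regular variation of independently marked point processes, truncated
Laplace-functional form (Theorem 3.2 of the paper). -/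
theorem stmt_14
    {T : Type*} [MetricSpace T] [CompleteSpace T] [TopologicalSpace.SeparableSpace T]
    [MeasurableSpace T] [BorelSpace T]
    {X : Type*} [MetricSpace X] [CompleteSpace X] [TopologicalSpace.SeparableSpace X]
    [MeasurableSpace X] [BorelSpace X]
    (x0 : X) (σ : ℝ → X → X)
    (hσc : ContinuousOn (fun p : ℝ × X => σ p.1 p.2) (Set.Ioi (0 : ℝ) ×ˢ Set.univ))
    (hσ1 : ∀ x, σ 1 x = x)
    (hσm : ∀ u v : ℝ, 0 < u → 0 < v → ∀ x, σ u (σ v x) = σ (u * v) x)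
    (hσ0 : ∀ u : ℝ, 0 < u → σ u x0 = x0)
    (ν : Measure X) [IsProbabilityMeasure ν] (hν0 : ν {x0} = 0)
    (a : ℕ → ℝ) (ha : ∀ n, 0 < a n) (haTop : Tendsto a atTop atTop)
    (μ : Measure X) (hμ0 : μ ≠ 0)
    (hμFin : ∀ ρ > (0 : ℝ), μ {x | ρ ≤ dist x0 x} ≠ ⊤)
    (hRV : ∀ h : X → ℝ, Continuous h → (∃ C, ∀ x, |h x| ≤ C) →
      (∃ ρ > (0 : ℝ), ∀ x, dist x0 x < ρ → h x = 0) →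
      Tendsto (fun n : ℕ => (n : ℝ) * ∫ x, h (σ (a n)⁻¹ x) ∂ν) atTop (𝓝 (∫ x, h x ∂μ)))
    {Ω : Type*} [MeasurableSpace Ω] (P : Measure Ω) [IsProbabilityMeasure P]
    (k : ℕ) (N : Ω → ℕ) (hNmeas : Measurable N)
    (hNmom : Integrable (fun ω => (N ω : ℝ) ^ (k + 1)) P)
    (hNk : 0 < P {ω | k + 1 ≤ N ω})
    (Tt : ℕ → Ω → T) (hTmeas : ∀ i, Measurable (Tt i))
    (Xx : ℕ → Ω → X) (hXmeas : ∀ i, Measurable (Xx i))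
    (hXlaw : ∀ i, Measure.map (Xx i) P = ν)
    (hIndep : ∀ (j n : ℕ) (A : ℕ → Set T) (B : ℕ → Set X),
      (∀ i, MeasurableSet (A i)) → (∀ i, MeasurableSet (B i)) →
      P (({ω | N ω = j} ∩ ⋂ i ∈ Finset.range n, {ω | Tt i ω ∈ A i}) ∩
          ⋂ i ∈ Finset.range n, {ω | Xx i ω ∈ B i})
        = P ({ω | N ω = j} ∩ ⋂ i ∈ Finset.range n, {ω | Tt i ω ∈ A i}) *
          ∏ i ∈ Finset.range n, P {ω | Xx i ω ∈ B i})
    (r : ℝ) (hr : 0 < r) (hrcont : μ {x | dist x0 x = r} = 0)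
    (f : T × X → ℝ) (hfc : Continuous f) (hf0 : ∀ z, 0 ≤ f z) (hfb : ∃ C, ∀ z, f z ≤ C)
    (hfvan : ∀ t x, dist x0 x < r → f (t, x) = 0) :
    Tendsto (fun n : ℕ => (n : ℝ) ^ (k + 1) *
        ∫ ω, (if k + 1 ≤ ((Finset.range (N ω)).filter
              (fun i => r ≤ dist x0 (σ (a n)⁻¹ (Xx i ω)))).card then
            Real.exp (-∑ i ∈ Finset.range (N ω), f (Tt i ω, σ (a n)⁻¹ (Xx i ω)))
          else 0) ∂P)
      atTop
      (𝓝 ((Nat.factorial (k + 1) : ℝ)⁻¹ *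
        ∫ ω, ∑ v ∈ (Fintype.piFinset fun _ : Fin (k + 1) => Finset.range (N ω)).filter
            (fun v => Function.Injective v),
          ∏ j, ∫ x in {x | r ≤ dist x0 x}, Real.exp (-f (Tt (v j) ω, x)) ∂μ ∂P)) := by
  have hσn : ∀ n, Continuous (σ (a n)⁻¹) := fun n => continuousOn_univ.1 <|
    hσc.comp (Continuous.prodMk_right _).continuousOn fun x _ => ⟨inv_pos.2 (ha n), trivial⟩
  have hdist : Continuous (dist x0) := continuous_const.dist continuous_id
  have := UniformSpace.secondCountable_of_separable X
  have hν : TendstoAwayFrom x0 (fun n => (n : NNReal) • ν.map (σ (a n)⁻¹)) μ := by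
    intro h hh hbdd hvan
    simpa only [integral_smul_nnreal_measure, NNReal.smul_def, NNReal.coe_natCast, smul_eq_mul,
      integral_map (hσn _).aemeasurable hh.aestronglyMeasurable] using hRV h hh hbdd hvan
  have hsphere : μ (frontier {x | r ≤ dist x0 x}) = 0 :=
    measure_mono_null ((frontier_le_subset_eq continuous_const hdist).trans
      fun x hx => hx.symm) hrcont
  obtain ⟨hind, hindep⟩ :=
    iIndepFun_and_indepFun_prodMk_pi_of_measure_inter hNmeas hTmeas hXmeas hIndep
  exact stmt_14_general hμFin hν hNmeas hNmom hTmeas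
    (fun n i => (hσn n).measurable.comp (hXmeas i))
    (fun n i => by rw [← Measure.map_map (hσn n).measurable (hXmeas i), hXlaw])
    (fun n => hind.comp _ fun _ => (hσn n).measurable)
    (fun n => hindep.comp measurable_id (measurable_pi_lambda _ fun i =>
      (hσn n).measurable.comp (measurable_pi_apply i)))
    (measurableSet_le measurable_const hdist.measurable) hsphere hr (fun _ hx => hx)
    hfc.measurable (fun t => hfc.comp (Continuous.prodMk_right t)) hf0
    fun t x hx => hfvan t x (not_le.1 hx)
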